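/- Let G be a finite solvable PST-group and let Z_∞(G) denote the hypercenter of G. If G/Z_∞(G) is a solvable SST-group (resp. a solvable BT-group), then G is a solvable SST-group (resp. a solvable BT-group). -/

import Mathlib

open scoped Pointwise

section Defs

variable {G : Type*} [Group G]

/-- `K` is an SS-permutable supplement of `H` in `G`: `HK = G` and `H` permutes with
every Sylow subgroup of `K`. -/
def IsSSSupplement (H K : Subgroup G) : Prop :=
  (H : Set G) * (K : Set G) = Set.univ ∧
    ∀ (p : ℕ) [Fact p.Prime] (P : Sylow p K),
      (H : Set G) * ((P.toSubgroup.map K.subtype : Subgroup G) : Set G) =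
        ((P.toSubgroup.map K.subtype : Subgroup G) : Set G) * (H : Set G)

/-- `H` is SS-permutable in `G`: `H` has a supplement `K` such that `H` permutes with
every Sylow subgroup of `K`. -/
def IsSSPermutable (H : Subgroup G) : Prop :=
  ∃ K : Subgroup G, IsSSSupplement H K

/-- `H` is NSS-permutable in `G`: `H` has a normal supplement `K` such that `H` permutes
with every Sylow subgroup of `K`. -/
def IsNSSPermutable (H : Subgroup G) : Prop :=
  ∃ K : Subgroup G, K.Normal ∧ IsSSSupplement H K

/-- `H` is S-permutable in `G`: it permutes with every Sylow subgroup of `G`. -/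
def IsSPermutable (H : Subgroup G) : Prop :=
  ∀ (p : ℕ) [Fact p.Prime] (P : Sylow p G),
    (H : Set G) * ((P : Subgroup G) : Set G) = ((P : Subgroup G) : Set G) * (H : Set G)

/-- `H` is semipermutable in `G`: `HX = XH` for every subgroup `X` with `gcd(|H|,|X|) = 1`. -/
def IsSemipermutable (H : Subgroup G) : Prop :=
  ∀ X : Subgroup G, Nat.Coprime (Nat.card H) (Nat.card X) →
    (H : Set G) * (X : Set G) = (X : Set G) * (H : Set G)

/-- `H` is S-semipermutable in `G`: `HQ = QH` for every Sylow `q`-subgroup `Q` of `G`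
with `q` a prime not dividing `|H|`. -/
def IsSSemipermutable (H : Subgroup G) : Prop :=
  ∀ (q : ℕ) [Fact q.Prime], ¬ q ∣ Nat.card H → ∀ Q : Sylow q G,
    (H : Set G) * ((Q : Subgroup G) : Set G) = ((Q : Subgroup G) : Set G) * (H : Set G)

end Defs

/-- `G` is an SST-group: SS-permutability is a transitive relation. -/
def IsSSTGroup (G : Type*) [Group G] : Prop :=
  ∀ H K : Subgroup G, H ≤ K → IsSSPermutable (H.subgroupOf K) → IsSSPermutable K →
    IsSSPermutable H

/-- `G` is an NSST-group: NSS-permutability is a transitive relation. -/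
def IsNSSTGroup (G : Type*) [Group G] : Prop :=
  ∀ H K : Subgroup G, H ≤ K → IsNSSPermutable (H.subgroupOf K) → IsNSSPermutable K →
    IsNSSPermutable H

/-- `G` is a PST-group: S-permutability is a transitive relation. -/
def IsPSTGroup (G : Type*) [Group G] : Prop :=
  ∀ H K : Subgroup G, H ≤ K → IsSPermutable (H.subgroupOf K) → IsSPermutable K →
    IsSPermutable H

/-- `G` is a BT-group: semipermutability is a transitive relation. -/
def IsBTGroup (G : Type*) [Group G] : Prop :=
  ∀ H K : Subgroup G, H ≤ K → IsSemipermutable (H.subgroupOf K) → IsSemipermutable K →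
    IsSemipermutable H

section Auxiliary

open Subgroup

section Permuting

variable {G : Type*} [Group G]

/-- Two subgroups permute as soon as one of the two products is contained in the other. -/
theorem mul_comm_of_forall_mem {H X : Subgroup G}
    (h : ∀ x ∈ X, ∀ y ∈ H, x * y ∈ (H : Set G) * (X : Set G)) :
    (H : Set G) * (X : Set G) = (X : Set G) * (H : Set G) := by
  have key : (X : Set G) * (H : Set G) ⊆ (H : Set G) * (X : Set G) := by
    rintro _ ⟨x, hx, y, hy, rfl⟩
    exact h x hx y hy
  refine Set.Subset.antisymm ?_ key
  have := Set.inv_subset_inv.mpr key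
  simpa [mul_inv_rev] using this

theorem mul_comm_of_normal_right (H X : Subgroup G) [hX : X.Normal] :
    (H : Set G) * (X : Set G) = (X : Set G) * (H : Set G) :=
  set_mul_normal_comm _ _

/-- If two subgroups permute, their product is their join. -/
theorem coe_sup_of_mul_comm {H X : Subgroup G}
    (h : (H : Set G) * (X : Set G) = (X : Set G) * (H : Set G)) :
    ((H ⊔ X : Subgroup G) : Set G) = (H : Set G) * (X : Set G) := by
  let T : Subgroup G :=
    { carrier := (H : Set G) * (X : Set G)
      one_mem' := ⟨1, H.one_mem, 1, X.one_mem, one_mul 1⟩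
      mul_mem' := by
        rintro a b ha hb
        have : a * b ∈ ((H : Set G) * (X : Set G)) * ((H : Set G) * (X : Set G)) :=
          Set.mul_mem_mul ha hb
        rwa [mul_assoc, ← mul_assoc (X : Set G), ← h, mul_assoc (H : Set G), coe_mul_coe,
          ← mul_assoc, coe_mul_coe] at this
      inv_mem' := by
        intro a ha
        have : a⁻¹ ∈ ((H : Set G) * (X : Set G))⁻¹ := Set.inv_mem_inv.mpr ha
        rw [mul_inv_rev] at this
        simpa [← h] using this }
  refine Set.Subset.antisymm ?_ ?_
  · have : H ⊔ X ≤ T := sup_le (fun y hy => ⟨y, hy, 1, X.one_mem, mul_one y⟩)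
      (fun x hx => ⟨1, H.one_mem, x, hx, one_mul x⟩)
    exact this
  · rintro _ ⟨y, hy, x, hx, rfl⟩
    exact mul_mem (mem_sup_left hy) (mem_sup_right hx)

theorem card_sup_dvd_of_mul_comm [Finite G] {H X : Subgroup G}
    (h : (H : Set G) * (X : Set G) = (X : Set G) * (H : Set G)) :
    Nat.card (H ⊔ X : Subgroup G) ∣ Nat.card H * Nat.card X := by
  have h1 : Nat.card (H ⊔ X : Subgroup G) = Nat.card ((X : Set G) * (H : Set G) : Set G) := by
    rw [← h, ← coe_sup_of_mul_comm h]
    rfl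
  rw [h1, card_mul_eq_card_subgroup_mul_card_quotient]
  refine mul_dvd_mul_left _ ?_
  have h2 : ((X : Set G).image (↑) : Set (G ⧸ H)) = MulAction.orbit X ((1 : G) : G ⧸ H) := by
    ext a
    constructor
    · rintro ⟨x, hx, rfl⟩
      refine ⟨⟨x, hx⟩, ?_⟩
      change ((x * 1 : G) : G ⧸ H) = _
      rw [mul_one]
    · rintro ⟨x, rfl⟩
      refine ⟨x, x.2, ?_⟩
      change _ = ((x * 1 : G) : G ⧸ H)
      rw [mul_one]
  rw [h2, Nat.card_congr (MulAction.orbitEquivQuotientStabilizer X ((1 : G) : G ⧸ H))]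
  exact card_quotient_dvd_card _

/-- A subgroup containing a Sylow subgroup for each prime is the whole group. -/
theorem eq_top_of_forall_sylow_le [Finite G] {U : Subgroup G}
    (h : ∀ (p : ℕ) [Fact p.Prime], ∃ P : Sylow p G, (P : Subgroup G) ≤ U) : U = ⊤ := by
  rw [← index_eq_one]
  by_contra hne
  obtain ⟨p, hp, hd⟩ := Nat.exists_prime_and_dvd hne
  have := Fact.mk hp
  obtain ⟨P, hP⟩ := h p
  exact P.not_dvd_index (hd.trans (index_dvd_of_le hP))

theorem le_of_card_coprime_index {P L : Subgroup G} [L.Normal]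
    (h : (Nat.card P).Coprime L.index) : P ≤ L := by
  rw [← relIndex_eq_one]
  exact Nat.eq_one_of_dvd_coprimes h (relIndex_dvd_card L P) (relIndex_dvd_index_of_normal L P)

theorem IsPGroup.le_of_not_dvd_index [Finite G] {p : ℕ} [hp : Fact p.Prime] {P L : Subgroup G}
    [L.Normal] (hP : IsPGroup p P) (h : ¬ p ∣ L.index) : P ≤ L := by
  obtain ⟨n, hn⟩ := IsPGroup.iff_card.mp hP
  refine le_of_card_coprime_index ?_
  rw [hn]
  exact Nat.Coprime.pow_left n ((Nat.Prime.coprime_iff_not_dvd hp.out).mpr h)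

end Permuting

section Nilpotent

variable {N : Type*} [Group N] [Finite N]

/-- In a finite nilpotent group, taking `p`-parts is a homomorphism given by a power map. -/
theorem exists_pow_primePart [hN : Group.IsNilpotent N] (p : ℕ) [hp : Fact p.Prime] :
    ∃ e : ℕ, (∀ a b : N, (a * b) ^ e = a ^ e * b ^ e) ∧ (∀ a : N, ∃ k, (a ^ e) ^ p ^ k = 1) ∧
      ∀ (s : N) (k : ℕ), s ^ p ^ k = 1 → s ^ e = s := by
  obtain ⟨φ⟩ := ((Group.isNilpotent_of_finite_tfae (G := N)).out 0 4).mp hN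
  have hcard : Nat.card N ≠ 0 := Nat.card_pos.ne'
  obtain ⟨k, m, hm, hkm⟩ := Nat.exists_eq_pow_mul_and_not_dvd hcard p hp.out.ne_one
  have hcop : (p ^ k).Coprime m :=
    Nat.Coprime.pow_left k ((Nat.Prime.coprime_iff_not_dvd hp.out).mpr hm)
  obtain ⟨e, he1, he0⟩ := Nat.chineseRemainder hcop 1 0
  have hm0 : m ∣ e := (Nat.modEq_zero_iff_dvd).mp he0
  have hpow : ∀ {M : Type _} [Group M] (s : M), s ^ p ^ k = 1 → s ^ e = s := by
    intro M _ s hs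
    conv_rhs => rw [← pow_one s]
    exact pow_eq_pow_iff_modEq.mpr (he1.of_dvd (orderOf_dvd_of_pow_eq_one hs))
  refine ⟨e, ?_, ?_, ?_⟩
  · intro a b
    obtain ⟨u, rfl⟩ := φ.surjective a
    obtain ⟨v, rfl⟩ := φ.surjective b
    rw [← map_mul, ← map_pow, ← map_pow, ← map_pow, ← map_mul]
    congr 1
    funext q P
    simp only [Pi.pow_apply, Pi.mul_apply]
    have := Fact.mk (Nat.prime_of_mem_primeFactors q.2)
    obtain ⟨n, hn⟩ := IsPGroup.iff_card.mp P.isPGroup'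
    have hd : (q : ℕ) ^ n ∣ p ^ k * m := by
      rw [← hn, ← hkm]
      exact card_subgroup_dvd_card _
    by_cases hqp : (q : ℕ) = p
    · have hd' : (q : ℕ) ^ n ∣ p ^ k := by
        refine Nat.Coprime.dvd_of_dvd_mul_right ?_ hd
        rw [hqp]
        exact Nat.Coprime.pow_left n ((Nat.Prime.coprime_iff_not_dvd hp.out).mpr hm)
      have hx : ∀ x : (P : Subgroup N), x ^ e = x := fun x => hpow x
        (orderOf_dvd_iff_pow_eq_one.mp ((orderOf_dvd_natCard x).trans (hn ▸ hd')))
      rw [hx, hx, hx]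
    · have hd' : (q : ℕ) ^ n ∣ m := by
        refine Nat.Coprime.dvd_of_dvd_mul_left ?_ hd
        exact Nat.Coprime.pow _ _ ((Nat.coprime_primes Fact.out hp.out).mpr hqp)
      have hx : ∀ x : (P : Subgroup N), x ^ e = 1 := fun x =>
        orderOf_dvd_iff_pow_eq_one.mp ((orderOf_dvd_natCard x).trans (hn ▸ hd'.trans hm0))
      rw [hx, hx, hx, one_mul]
  · intro a
    refine ⟨k, ?_⟩
    obtain ⟨c, rfl⟩ := hm0
    rw [← pow_mul, show m * c * p ^ k = (p ^ k * m) * c by ring, ← hkm, pow_mul, pow_card_eq_one',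
      one_pow]
  · intro s j hs
    refine hpow s ?_
    have h1 : orderOf s ∣ p ^ k * m := hkm ▸ orderOf_dvd_natCard s
    have h2 : orderOf s ∣ p ^ j := orderOf_dvd_of_pow_eq_one hs
    refine orderOf_dvd_iff_pow_eq_one.mp (Nat.Coprime.dvd_of_dvd_mul_right ?_ h1)
    exact Nat.Coprime.coprime_dvd_left h2
      (Nat.Coprime.pow_left j ((Nat.Prime.coprime_iff_not_dvd hp.out).mpr hm))

/-- In a finite nilpotent group, elements of coprime orders commute. -/
theorem commute_of_coprime_orderOf [hN : Group.IsNilpotent N] {a b : N}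
    (h : (orderOf a).Coprime (orderOf b)) : a * b = b * a := by
  obtain ⟨φ⟩ := ((Group.isNilpotent_of_finite_tfae (G := N)).out 0 4).mp hN
  obtain ⟨u, rfl⟩ := φ.surjective a
  obtain ⟨v, rfl⟩ := φ.surjective b
  rw [← map_mul, ← map_mul]
  congr 1
  rw [MulEquiv.orderOf_eq, MulEquiv.orderOf_eq] at h
  funext q P
  simp only [Pi.mul_apply]
  have := Fact.mk (Nat.prime_of_mem_primeFactors q.2)
  have hdvd : ∀ w : (∀ p : (Nat.card N).primeFactors, ∀ P : Sylow p N, (P : Subgroup N)),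
      w q P ≠ 1 → (q : ℕ) ∣ orderOf w := by
    intro w hw
    refine (P.isPGroup'.dvd_orderOf hw).trans (orderOf_dvd_of_pow_eq_one ?_)
    rw [← Pi.pow_apply, ← Pi.pow_apply, pow_orderOf_eq_one]
    rfl
  by_cases hu : u q P = 1
  · rw [hu, one_mul, mul_one]
  by_cases hv : v q P = 1
  · rw [hv, one_mul, mul_one]
  exact absurd h (Nat.Prime.not_coprime_iff_dvd.mpr ⟨q, Fact.out, hdvd u hu, hdvd v hv⟩)

/-- In a finite nilpotent group, a subgroup permutes with the Sylow subgroups of each of its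
supplements. -/
theorem mul_comm_of_supplement_of_isNilpotent [hN : Group.IsNilpotent N] {H K P : Subgroup N}
    (hHK : (H : Set N) * (K : Set N) = Set.univ) {p : ℕ} [hp : Fact p.Prime]
    (hP : ∀ k ∈ K, (∃ j, k ^ p ^ j = 1) → k ∈ P) (hP' : IsPGroup p P) :
    (H : Set N) * (P : Set N) = (P : Set N) * (H : Set N) := by
  obtain ⟨S⟩ : Nonempty (Sylow p N) := inferInstance
  have hS : (S : Subgroup N).Normal := inferInstance
  obtain ⟨e, hmul, hpart, hfix⟩ := exists_pow_primePart (N := N) p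
  have hSH : ∀ s ∈ (S : Subgroup N), s ∈ (H : Set N) * (P : Set N) := by
    intro s hs
    obtain ⟨h, hh, k, hk, hhk⟩ : s ∈ (H : Set N) * (K : Set N) := hHK ▸ Set.mem_univ s
    obtain ⟨j, hj⟩ := S.isPGroup' ⟨s, hs⟩
    have : s = h ^ e * k ^ e := by
      rw [← hmul, show h * k = s from hhk, hfix s j (by simpa using congrArg Subtype.val hj)]
    rw [this]
    exact Set.mul_mem_mul (H.pow_mem hh e) (hP _ (K.pow_mem hk e) (hpart k))
  have hPS : P ≤ S := hP'.le_of_not_dvd_index S.not_dvd_index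
  refine mul_comm_of_forall_mem fun x hx y hy => ?_
  have hc : y⁻¹ * x * y ∈ (S : Subgroup N) := by
    simpa using hS.conj_mem x (hPS hx) y⁻¹
  obtain ⟨h, hh, k, hk, hhk⟩ := hSH _ hc
  refine ⟨y * h, H.mul_mem hy hh, k, hk, ?_⟩
  simp only at hhk ⊢
  rw [mul_assoc, hhk]
  group

end Nilpotent

section SylowNormalizes

variable {G : Type*} [Group G]

theorem le_normalizer_of_conj_mem {Q H : Subgroup G}
    (h : ∀ x ∈ Q, ∀ y ∈ H, x * y * x⁻¹ ∈ H) : Q ≤ normalizer (H : Set G) := by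
  intro x hx
  rw [mem_normalizer_iff]
  refine fun y => ⟨h x hx y, fun hy => ?_⟩
  have := h x⁻¹ (Q.inv_mem hx) _ hy
  simpa [mul_assoc] using this

theorem conj_mem_of_le_normalizer {Q H : Subgroup G} (h : Q ≤ normalizer (H : Set G)) {x y : G}
    (hx : x ∈ Q) (hy : y ∈ H) : x * y * x⁻¹ ∈ H :=
  (mem_normalizer_iff.mp (h hx) y).mp hy

/-- Whenever `B / N` is a normal `p`-section of `G`, every Sylow `q`-subgroup of `G` with `q ≠ p`
normalizes each subgroup between `N` and `B`. -/
def SylowNormalizesSections (G : Type*) [Group G] : Prop :=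
  ∀ (p q : ℕ) [Fact p.Prime] [Fact q.Prime], p ≠ q → ∀ N H B : Subgroup G, N.Normal → B.Normal →
    N ≤ H → H ≤ B → (∃ n, N.relIndex B = p ^ n) →
    ∀ Q : Sylow q G, (Q : Subgroup G) ≤ normalizer (H : Set G)

theorem isSPermutable_of_normal (B : Subgroup G) [B.Normal] : IsSPermutable B :=
  fun _ _ P => (set_mul_normal_comm (P : Set G) B).symm

/-- A subgroup containing a normal subgroup of `p`-power index is S-permutable. -/
theorem isSPermutable_of_index_eq_pow [Finite G] {p : ℕ} [hp : Fact p.Prime] {N H : Subgroup G}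
    [N.Normal] (hNH : N ≤ H) {n : ℕ} (hn : N.index = p ^ n) : IsSPermutable H := by
  intro r hr P
  by_cases hrp : r = p
  · subst hrp
    have htop : N ⊔ P = ⊤ := by
      rw [← index_eq_one]
      refine Nat.eq_one_of_dvd_coprimes (a := r ^ n) (b := (P : Subgroup G).index) ?_
        (by rw [← hn]; exact index_dvd_of_le le_sup_left) (index_dvd_of_le le_sup_right)
      exact Nat.Coprime.pow_left n ((Nat.Prime.coprime_iff_not_dvd hp.out).mpr P.not_dvd_index)
    have h1 : (N : Set G) * (P : Set G) = Set.univ := by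
      have := normal_mul N (P : Subgroup G)
      rw [htop] at this
      exact this.symm
    have h2 : (P : Set G) * (N : Set G) = Set.univ := by
      rw [set_mul_normal_comm (P : Set G) N]
      exact h1
    have h3 : (H : Set G) * (P : Set G) = Set.univ :=
      Set.univ_subset_iff.mp (h1 ▸ Set.mul_subset_mul_right hNH)
    have h4 : (P : Set G) * (H : Set G) = Set.univ :=
      Set.univ_subset_iff.mp (h2 ▸ Set.mul_subset_mul_left hNH)
    exact h3.trans h4.symm
  · have hPN : (P : Subgroup G) ≤ N := by
      refine P.isPGroup'.le_of_not_dvd_index ?_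
      rw [hn]
      intro hd
      exact hrp ((Nat.prime_dvd_prime_iff_eq hr.out hp.out).mp (hr.out.dvd_of_dvd_pow hd))
    refine mul_comm_of_forall_mem fun x hx y hy => ?_
    exact ⟨x * y, H.mul_mem (hNH (hPN hx)) hy, 1, (P : Subgroup G).one_mem, mul_one _⟩

theorem IsPSTGroup.sylowNormalizesSections [Finite G] (hG : IsPSTGroup G) :
    SylowNormalizesSections G := by
  intro p q hp hq hpq N H B hN hB hNH hHB ⟨n, hn⟩ Q
  have hH : IsSPermutable H := by
    refine hG H B hHB ?_ (isSPermutable_of_normal B)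
    exact isSPermutable_of_index_eq_pow (p := p) (N := N.subgroupOf B)
      (comap_mono hNH) hn
  have hcomm := hH q Q
  obtain ⟨m, hm⟩ := IsPGroup.iff_card.mp Q.isPGroup'
  set T : Subgroup G := H ⊔ Q with hT
  have hHT : H ≤ T := le_sup_left
  have h1 : H.relIndex T ∣ q ^ m := by
    have h2 : Nat.card H * H.relIndex T = Nat.card T := by
      have := relIndex_mul_relIndex ⊥ H T bot_le hHT
      simpa only [relIndex_bot_left] using this
    have h3 := card_sup_dvd_of_mul_comm hcomm
    rw [← hT, ← h2, hm] at h3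
    exact Nat.dvd_of_mul_dvd_mul_left Nat.card_pos h3
  have hle : H ≤ B ⊓ T := le_inf hHB hHT
  have h4 : H.relIndex (B ⊓ T) ∣ q ^ m :=
    (Dvd.intro _ (relIndex_mul_relIndex H (B ⊓ T) T hle inf_le_right)).trans h1
  have h5 : H.relIndex (B ⊓ T) ∣ p ^ n := by
    rw [← hn]
    exact (Dvd.intro _ (relIndex_mul_relIndex H (B ⊓ T) B hle inf_le_left)).trans
      (Dvd.intro_left _ (relIndex_mul_relIndex N H B hNH hHB))
  have h6 : B ⊓ T ≤ H := by
    rw [← relIndex_eq_one]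
    exact Nat.eq_one_of_dvd_coprimes
      (Nat.Coprime.pow _ _ ((Nat.coprime_primes hp.out hq.out).mpr hpq)) h5 h4
  refine le_normalizer_of_conj_mem fun x hx y hy => h6 ⟨hB.conj_mem y (hHB hy) x, ?_⟩
  have hxT : x ∈ T := mem_sup_right hx
  exact T.mul_mem (T.mul_mem hxT (hHT hy)) (T.inv_mem hxT)

theorem SylowNormalizesSections.of_surjective [Finite G] {G' : Type*} [Group G']
    (hG : SylowNormalizesSections G) (f : G →* G') (hf : Function.Surjective f) :
    SylowNormalizesSections G' := by
  intro p q hp hq hpq N H B hN hB hNH hHB ⟨n, hn⟩ Q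
  obtain ⟨Q', rfl⟩ := Sylow.mapSurjective_surjective hf q Q
  have h := hG p q hpq (N.comap f) (H.comap f) (B.comap f) (hN.comap f) (hB.comap f)
    (comap_mono hNH) (comap_mono hHB)
    ⟨n, by rw [relIndex_comap, map_comap_eq_self_of_surjective hf, hn]⟩ Q'
  refine le_normalizer_of_conj_mem ?_
  rintro _ ⟨x, hx, rfl⟩ y hy
  obtain ⟨z, rfl⟩ := hf y
  have := conj_mem_of_le_normalizer h hx (y := z) hy
  simpa using this

/-- Subgroups of a normal `p`-subgroup are normalized by Sylow `q`-subgroups. -/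
theorem SylowNormalizesSections.le_normalizer [Finite G] (hG : SylowNormalizesSections G)
    {p q : ℕ} [Fact p.Prime] [Fact q.Prime] (hpq : p ≠ q) {X P : Subgroup G} [hP : P.Normal]
    (hPp : IsPGroup p P) (hX : X ≤ P) (Q : Sylow q G) :
    (Q : Subgroup G) ≤ normalizer (X : Set G) := by
  obtain ⟨n, hn⟩ := IsPGroup.iff_card.mp hPp
  exact hG p q hpq ⊥ X P inferInstance hP bot_le hX ⟨n, by rw [relIndex_bot_left, hn]⟩ Q

end SylowNormalizes

section PowerAutomorphism

variable {G : Type*} [Group G] {p : ℕ}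

theorem exists_zpow_zpow_eq [hp : Fact p.Prime] {x : G} (hx : x ^ p = 1) {j : ℤ}
    (hj : ¬ (p : ℤ) ∣ j) :
    ∃ a : ℤ, (x ^ j) ^ a = x := by
  have hcop : IsCoprime (p : ℤ) j :=
    (Prime.coprime_iff_not_dvd (Nat.prime_iff_prime_int.mp hp.out)).mpr hj
  obtain ⟨b, a, hab⟩ := hcop
  refine ⟨a, ?_⟩
  have h1 : x ^ (b * (p : ℤ)) = 1 := by
    rw [mul_comm, zpow_mul, zpow_natCast, hx, one_zpow]
  calc (x ^ j) ^ a = x ^ (b * (p : ℤ)) * x ^ (a * j) := by rw [h1, one_mul, mul_comm a, zpow_mul]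
    _ = x := by rw [← zpow_add, hab, zpow_one]

theorem zpow_eq_one_of_dvd {x : G} (hx : x ^ p = 1) {j : ℤ} (hj : (p : ℤ) ∣ j) : x ^ j = 1 := by
  obtain ⟨c, rfl⟩ := hj
  rw [zpow_mul, zpow_natCast, hx, one_zpow]

/-- If `g` centralizes `x` and normalizes `⟨y⟩` and `⟨xy⟩`, where `x` and `y` commute and have
exponent `p`, then `g` centralizes `y`. -/
theorem commute_of_conj_eq_zpow [hp : Fact p.Prime] {g x y : G} (hxy : Commute x y)
    (hx : x ^ p = 1) (hy : y ^ p = 1)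
    (hx1 : x ≠ 1) (hgx : Commute g x) {k i : ℤ} (hk : g * y * g⁻¹ = y ^ k)
    (hi : g * (x * y) * g⁻¹ = (x * y) ^ i) : Commute g y := by
  have hgx' : g * x * g⁻¹ = x := by rw [hgx.eq, mul_inv_cancel_right]
  have h1 : x * y ^ k = x ^ i * y ^ i := by
    rw [← hxy.mul_zpow, ← hi, ← hk]
    nth_rewrite 1 [← hgx']
    group
  have h2 : x ^ (i - 1) = y ^ (k - i) := by
    have h3 : y ^ (k - i) = x⁻¹ * (x * y ^ k) * (y ^ i)⁻¹ := by
      rw [zpow_sub]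
      group
    rw [h3, h1, zpow_sub_one, ((Commute.refl x).zpow_left i).inv_right.eq]
    group
  by_cases hd : (p : ℤ) ∣ i - 1
  · have h4 : y ^ k = y := by
      have h5 : y ^ (k - i) = 1 := by rw [← h2, zpow_eq_one_of_dvd hx hd]
      calc y ^ k = y ^ (k - i) * y ^ (i - 1) * y := by
            rw [← zpow_add, ← zpow_add_one]
            congr 1
            ring
        _ = y := by rw [h5, zpow_eq_one_of_dvd hy hd, one_mul, one_mul]
    rw [h4] at hk
    exact mul_inv_eq_iff_eq_mul.mp hk
  · obtain ⟨a, ha⟩ := exists_zpow_zpow_eq hx hd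
    have h5 : y ^ ((k - i) * a) = x := by rw [zpow_mul, ← h2, ha]
    have hd' : ¬ (p : ℤ) ∣ (k - i) * a := fun h => hx1 (by rw [← h5, zpow_eq_one_of_dvd hy h])
    obtain ⟨b, hb⟩ := exists_zpow_zpow_eq hy hd'
    rw [← hb, h5]
    exact hgx.zpow_right b

theorem IsPGroup.exists_pow_ne_one {P : Subgroup G} (hP : IsPGroup p P) {x : G} (hx : x ∈ P)
    (hx1 : x ≠ 1) : ∃ n : ℕ, x ^ n ≠ 1 ∧ (x ^ n) ^ p = 1 := by
  classical
  have hex : ∃ k, x ^ p ^ k = 1 := by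
    obtain ⟨k, hk⟩ := hP ⟨x, hx⟩
    exact ⟨k, by simpa using congrArg Subtype.val hk⟩
  have h0 : Nat.find hex ≠ 0 := by
    intro h
    have := Nat.find_spec hex
    rw [h, pow_zero, pow_one] at this
    exact hx1 this
  obtain ⟨k, hk⟩ := Nat.exists_eq_succ_of_ne_zero h0
  refine ⟨p ^ k, Nat.find_min hex (by omega), ?_⟩
  rw [← pow_mul, ← pow_succ]
  have := Nat.find_spec hex
  rwa [hk] at this

/-- An element of order prime to `p` that normalizes every subgroup of a `p`-subgroup `P` and
centralizes some nontrivial element of `P` centralizes `P`. -/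
theorem IsPGroup.commute_of_normalizes [Finite G] [hp : Fact p.Prime] {P : Subgroup G}
    (hP : IsPGroup p P) {g : G}
    {m : ℕ} (hm : m.Coprime p) (hgm : g ^ m = 1)
    (hinv : ∀ x ∈ P, ∃ k : ℤ, g * x * g⁻¹ = x ^ k)
    {x : G} (hx : x ∈ P) (hx1 : x ≠ 1) (hgx : Commute g x) {w : G} (hw : w ∈ P) :
    Commute g w := by
  have : Nontrivial P := ⟨⟨x, hx⟩, 1, fun h => hx1 (congrArg Subtype.val h)⟩
  have : Nontrivial (center P) := hP.center_nontrivial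
  obtain ⟨⟨⟨z', hz'⟩, hz'c⟩, hz'1⟩ := exists_ne (1 : center P)
  obtain ⟨n, hn1, hnp⟩ := hP.exists_pow_ne_one hz' (fun h => hz'1 (by ext; exact h))
  set z := z' ^ n with hzdef
  have hz : z ∈ P := P.pow_mem hz' n
  have hzc : ∀ y ∈ P, Commute z y := by
    intro y hy
    have h := (mem_center_iff.mp hz'c) ⟨y, hy⟩
    have h' : y * z' = z' * y := congrArg Subtype.val h
    exact (show Commute z' y from h'.symm).pow_left n
  obtain ⟨l, hl1, hlp⟩ := hP.exists_pow_ne_one hx hx1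
  have hgz : Commute g z := by
    obtain ⟨k, hk⟩ := hinv z hz
    obtain ⟨i, hi⟩ := hinv (x ^ l * z) (P.mul_mem (P.pow_mem hx l) hz)
    exact commute_of_conj_eq_zpow (hzc _ (P.pow_mem hx l)).symm hlp hnp hl1 (hgx.pow_right l) hk hi
  have hprime : ∀ y ∈ P, y ^ p = 1 → Commute g y := by
    intro y hy hyp
    obtain ⟨k, hk⟩ := hinv y hy
    obtain ⟨i, hi⟩ := hinv (z * y) (P.mul_mem hz hy)
    exact commute_of_conj_eq_zpow (hzc y hy) hnp hyp hn1 hgz hk hi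
  have key : ∀ (k : ℕ) (w : G), w ∈ P → w ^ p ^ k = 1 → Commute g w := by
    intro k
    induction k with
    | zero =>
      intro w _ hw1
      rw [pow_zero, pow_one] at hw1
      rw [hw1]
      exact Commute.one_right g
    | succ k ih =>
      intro w hw hw1
      have hwp : Commute g (w ^ p) := ih (w ^ p) (P.pow_mem hw p)
        (by rw [← pow_mul, ← pow_succ', hw1])
      obtain ⟨j, hj⟩ := hinv w hw
      set u := w ^ (j - 1) with hu
      have hwu : g * w * g⁻¹ = w * u := by
        rw [hj, hu, ← zpow_one_add]
        congr 1
        ring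
      have hcwu : Commute w u := (Commute.refl w).zpow_right _
      have hup : u ^ p = 1 := by
        have h1 : (g * w * g⁻¹) ^ p = w ^ p := by
          rw [conj_pow, hwp.eq, mul_inv_cancel_right]
        rw [hwu, hcwu.mul_pow] at h1
        exact mul_eq_left.mp h1
      have hgu : Commute g u := hprime u (P.zpow_mem hw _) hup
      have hit : ∀ s : ℕ, g ^ s * w * (g ^ s)⁻¹ = w * u ^ s := by
        intro s
        induction s with
        | zero => simp
        | succ s ihs =>
          calc g ^ (s + 1) * w * (g ^ (s + 1))⁻¹ = g * (g ^ s * w * (g ^ s)⁻¹) * g⁻¹ := by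
                rw [pow_succ']
                group
            _ = (g * w * g⁻¹) * (g * u ^ s * g⁻¹) := by
                rw [ihs]
                group
            _ = w * u ^ (s + 1) := by
                rw [hwu, (hgu.pow_right s).eq, mul_inv_cancel_right, mul_assoc, ← pow_succ']
      have hum : u ^ m = 1 := by
        have := hit m
        rw [hgm, one_mul, inv_one, mul_one] at this
        exact (mul_eq_left.mp this.symm)
      have hu1 : u = 1 := by
        have : orderOf u ∣ 1 := hm ▸ Nat.dvd_gcd (orderOf_dvd_of_pow_eq_one hum)
          (orderOf_dvd_of_pow_eq_one hup)
        exact orderOf_eq_one_iff.mp (Nat.dvd_one.mp this)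
      rw [hu1, mul_one] at hwu
      exact mul_inv_eq_iff_eq_mul.mp hwu
  obtain ⟨k, hk⟩ := hP ⟨w, hw⟩
  exact key k w hw (by simpa using congrArg Subtype.val hk)

end PowerAutomorphism

section NormalSylow

variable {G : Type*} [Group G]

/-- `G` has a normal `p`-complement. -/
def HasNormalComplement (p : ℕ) (G : Type*) [Group G] : Prop :=
  ∃ C : Subgroup G, C.Normal ∧ ¬ p ∣ Nat.card C ∧ ∃ n, C.index = p ^ n

/-- `G` has a normal Sylow `p`-subgroup `P` all of whose subgroups are normal in `G`, and which
satisfies `P = [P, G]` and meets the center of `G` trivially. -/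
def HasNoncentralNormalSylow (p : ℕ) (G : Type*) [Group G] : Prop :=
  ∃ P : Subgroup G, P.Normal ∧ IsPGroup p P ∧ ¬ p ∣ P.index ∧ (∀ X ≤ P, X.Normal) ∧
    P ≤ ⁅P, (⊤ : Subgroup G)⁆ ∧ P ⊓ center G = ⊥

theorem SylowNormalizesSections.of_normal_sylow [Finite G] (hG : SylowNormalizesSections G)
    {p : ℕ} [hp : Fact p.Prime] (P : Subgroup G) [hPn : P.Normal] (hPp : IsPGroup p P)
    (hPi : ¬ p ∣ P.index) : HasNormalComplement p G ∨ HasNoncentralNormalSylow p G := by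
  obtain ⟨n, hn⟩ := IsPGroup.iff_card.mp hPp
  by_cases hc : ∀ (q : ℕ) [Fact q.Prime], p ≠ q → ∀ Q : Sylow q G,
      (Q : Subgroup G) ≤ centralizer (P : Set G)
  · left
    have hcop : (Nat.card P).Coprime P.index := by
      rw [hn]
      exact Nat.Coprime.pow_left n ((Nat.Prime.coprime_iff_not_dvd hp.out).mpr hPi)
    obtain ⟨R, hR⟩ := exists_right_complement'_of_coprime hcop
    have hRc : Nat.card R = P.index := hR.symm.index_eq_card.symm
    have hRi : R.index = p ^ n := by rw [hR.index_eq_card, hn]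
    have hRP : R ≤ centralizer (P : Set G) := by
      refine le_of_card_coprime_index (Nat.coprime_of_dvd fun q hq h1 h2 => ?_)
      have := Fact.mk hq
      obtain ⟨Q⟩ : Nonempty (Sylow q G) := inferInstance
      refine Q.not_dvd_index (h2.trans (index_dvd_of_le (hc q ?_ Q)))
      rintro rfl
      exact hPi (hRc ▸ h1)
    refine ⟨R, ?_, hRc ▸ hPi, n, hRi⟩
    rw [← normalizer_eq_top_iff, eq_top_iff, ← hR.sup_eq_top]
    refine sup_le (le_normalizer_of_conj_mem fun x hx y hy => ?_) Subgroup.le_normalizer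
    have := mem_centralizer_iff.mp (hRP hy) x hx
    rwa [this, mul_inv_cancel_right]
  · right
    push Not at hc
    obtain ⟨q, hq, hpq, Q, hQ⟩ := hc
    obtain ⟨g, hgQ, hgP⟩ := SetLike.not_le_iff_exists.mp hQ
    obtain ⟨k, hk⟩ := Q.isPGroup' ⟨g, hgQ⟩
    have hgk : g ^ q ^ k = 1 := by simpa using congrArg Subtype.val hk
    have hcop : (q ^ k).Coprime p :=
      Nat.Coprime.pow_left k ((Nat.coprime_primes hq.out hp.out).mpr hpq.symm)
    have hinv : ∀ x ∈ P, ∃ k : ℤ, g * x * g⁻¹ = x ^ k := by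
      intro x hx
      have := conj_mem_of_le_normalizer (hG.le_normalizer hpq hPp (X := zpowers x)
        (zpowers_le.mpr hx) Q) hgQ (mem_zpowers x)
      obtain ⟨k, hk⟩ := mem_zpowers_iff.mp this
      exact ⟨k, hk.symm⟩
    have hfix : ∀ x ∈ P, Commute g x → x = 1 := by
      intro x hx hgx
      by_contra hx1
      refine hgP (mem_centralizer_iff.mpr fun w hw => ?_)
      exact (hPp.commute_of_normalizes hcop hgk hinv hx hx1 hgx hw).eq.symm
    have hsurj : ∀ y ∈ P, ∃ x ∈ P, x⁻¹ * g * x * g⁻¹ = y := by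
      let φ : P → P := fun x => x⁻¹ * ⟨g * x * g⁻¹, hPn.conj_mem _ x.2 g⟩
      have hφ : Function.Injective φ := by
        rintro ⟨x, hx⟩ ⟨y, hy⟩ hxy
        have h1 : x⁻¹ * (g * x * g⁻¹) = y⁻¹ * (g * y * g⁻¹) := congrArg Subtype.val hxy
        have h2 : Commute g (y * x⁻¹) := by
          change g * (y * x⁻¹) = y * x⁻¹ * g
          calc g * (y * x⁻¹) = y * (y⁻¹ * (g * y * g⁻¹)) * (g * x⁻¹) := by group
            _ = y * x⁻¹ * g := by rw [← h1]; group
        have h3 := hfix _ (P.mul_mem hy (P.inv_mem hx)) h2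
        exact Subtype.ext (mul_inv_eq_one.mp h3).symm
      intro y hy
      obtain ⟨⟨x, hx⟩, hxy⟩ := Finite.injective_iff_surjective.mp hφ ⟨y, hy⟩
      refine ⟨x, hx, ?_⟩
      have : x⁻¹ * (g * x * g⁻¹) = y := congrArg Subtype.val hxy
      rw [← this]
      group
    refine ⟨P, hPn, hPp, hPi, fun X hX => ?_, fun y hy => ?_, ?_⟩
    · have hnorm : P ≤ normalizer (X : Set G) := by
        intro y hy
        obtain ⟨x, hx, rfl⟩ := hsurj y hy
        refine mul_mem ?_ (inv_mem (hG.le_normalizer hpq hPp hX Q hgQ))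
        refine hG.le_normalizer hpq hPp hX (x⁻¹ • Q) ?_
        refine ⟨g, hgQ, ?_⟩
        simp
      rw [← normalizer_eq_top_iff]
      refine eq_top_of_forall_sylow_le fun r hr => ?_
      obtain ⟨S⟩ : Nonempty (Sylow r G) := inferInstance
      refine ⟨S, ?_⟩
      by_cases hrp : p = r
      · subst hrp
        exact (S.isPGroup'.le_of_not_dvd_index hPi).trans hnorm
      · exact hG.le_normalizer hrp hPp hX S
    · obtain ⟨x, hx, rfl⟩ := hsurj y hy
      have := commutator_mem_commutator (P.inv_mem hx) (mem_top g)
      rwa [commutatorElement_def, inv_inv] at this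
    · rw [eq_bot_iff]
      rintro z ⟨hzP, hzc⟩
      exact mem_bot.mpr (hfix z hzP (mem_center_iff.mp hzc g))

/-- A nontrivial normal subgroup of a finite solvable group contains a nontrivial abelian normal
subgroup of prime exponent. -/
theorem exists_normal_pow_eq_one [Finite G] [hsol : Group.IsSolvable G] {R : Subgroup G}
    [hRn : R.Normal] (hR : R ≠ ⊥) : ∃ (r : ℕ) (T : Subgroup G), r.Prime ∧ T ≤ R ∧ T.Normal ∧ T ≠ ⊥ ∧
      ∀ x ∈ T, x ^ r = 1 := by
  obtain ⟨A, ⟨hAR, hAn, hA⟩, hmin⟩ := (wellFounded_lt (α := Subgroup G)).has_min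
    {A | A ≤ R ∧ A.Normal ∧ A ≠ ⊥} ⟨R, le_rfl, hRn, hR⟩
  have hcomm : ⁅A, A⁆ = ⊥ := by
    by_contra hne
    exact hmin ⁅A, A⁆ ⟨(commutator_le_left A A).trans hAR, inferInstance, hne⟩
      (Group.IsSolvable.commutator_lt_of_ne_bot hA)
  have hab : ∀ x ∈ A, ∀ y ∈ A, Commute x y := fun x hx y hy =>
    commutatorElement_eq_one_iff_commute.mp (mem_bot.mp (hcomm ▸ commutator_mem_commutator hx hy))
  obtain ⟨r, hr, hrd⟩ := Nat.exists_prime_and_dvd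
    (fun h => hA (card_eq_one.mp h) : Nat.card A ≠ 1)
  have := Fact.mk hr
  let T : Subgroup G :=
    { carrier := {x | x ∈ A ∧ x ^ r = 1}
      one_mem' := ⟨A.one_mem, one_pow r⟩
      mul_mem' := fun {x y} hx hy =>
        ⟨A.mul_mem hx.1 hy.1, by rw [(hab x hx.1 y hy.1).mul_pow, hx.2, hy.2, one_mul]⟩
      inv_mem' := fun {x} hx => ⟨A.inv_mem hx.1, by rw [inv_pow, hx.2, inv_one]⟩ }
  refine ⟨r, T, hr, fun x hx => hAR hx.1, ⟨fun x hx g => ⟨hAn.conj_mem x hx.1 g, ?_⟩⟩, ?_,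
    fun x hx => hx.2⟩
  · rw [conj_pow, hx.2, mul_one, mul_inv_cancel]
  · intro hT
    obtain ⟨x, hx⟩ := exists_prime_orderOf_dvd_card' r hrd
    have hxT : (x : G) ∈ T := ⟨x.2, by rw [← hx, ← coe_pow, pow_orderOf_eq_one]; rfl⟩
    rw [hT, mem_bot] at hxT
    have : x = 1 := Subtype.ext hxT
    rw [this, orderOf_one] at hx
    exact hr.one_lt.ne hx

theorem SylowNormalizesSections.exists_normal_card_prime [Finite G] [hsol : Group.IsSolvable G]
    (hG : SylowNormalizesSections G) {R : Subgroup G} [hRn : R.Normal] (hR : R ≠ ⊥) :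
    ∃ N ≤ R, N.Normal ∧ (Nat.card N).Prime := by
  obtain ⟨r, T, hr, hTR, hTn, hT, hTr⟩ := exists_normal_pow_eq_one hR
  have := Fact.mk hr
  have hTp : IsPGroup r T := fun x => ⟨1, Subtype.ext (by simpa using hTr x x.2)⟩
  obtain ⟨S⟩ : Nonempty (Sylow r G) := inferInstance
  let _ : MulAction S T := MulAction.compHom T ((MulAut.conjNormal (H := T)).comp
    (S : Subgroup G).subtype)
  have hsmul : ∀ (s : S) (x : T), ((s • x : T) : G) = s * x * (s : G)⁻¹ := fun s x => rfl
  have hdvd : r ∣ Nat.card T := by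
    obtain ⟨n, hn⟩ := IsPGroup.iff_card.mp hTp
    rw [hn]
    refine dvd_pow_self r ?_
    rintro rfl
    exact hT (card_eq_one.mp hn)
  obtain ⟨x, hx, hx1⟩ := S.isPGroup'.exists_fixed_point_of_prime_dvd_card_of_fixed_point T hdvd
    (a := 1) (fun s => Subtype.ext (by simp [hsmul]))
  have hx1' : (x : G) ≠ 1 := fun h => hx1 (Subtype.ext h.symm)
  refine ⟨zpowers (x : G), (zpowers_le.mpr x.2).trans hTR, ?_, ?_⟩
  · rw [← normalizer_eq_top_iff]
    refine eq_top_of_forall_sylow_le fun q hq => ?_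
    by_cases hqr : r = q
    · subst hqr
      refine ⟨S, le_normalizer_of_conj_mem fun s hs y hy => ?_⟩
      obtain ⟨k, rfl⟩ := mem_zpowers_iff.mp hy
      have h1 : s * x * s⁻¹ = x := congrArg Subtype.val (hx ⟨s, hs⟩)
      rw [← conj_zpow, h1]
      exact hy
    · obtain ⟨Q⟩ : Nonempty (Sylow q G) := inferInstance
      exact ⟨Q, hG.le_normalizer hqr hTp (zpowers_le.mpr x.2) Q⟩
  · rw [Nat.card_zpowers, orderOf_eq_prime (hTr x x.2) hx1']
    exact hr

end NormalSylow

section Dichotomy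

open scoped commutatorElement

theorem commutator_le_centralizer_of_card_prime {G : Type*} [Group G] {N : Subgroup G}
    [N.Normal] (hN : (Nat.card N).Prime) :
    ⁅(⊤ : Subgroup G), (⊤ : Subgroup G)⁆ ≤ centralizer (N : Set G) := by
  have := Fact.mk hN
  have hcyc : IsCyclic N := isCyclic_of_prime_card rfl
  rw [commutator_le]
  intro x _ y _
  have h1 : MulAut.conjNormal (H := N) ⁅x, y⁆ = 1 := by
    rw [map_commutatorElement, commutatorElement_eq_one_iff_mul_comm]
    apply (IsCyclic.mulAutMulEquiv N).injective
    rw [map_mul, map_mul, mul_comm]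
  refine mem_centralizer_iff.mpr fun n hn => ?_
  have h2 : ⁅x, y⁆ * n * ⁅x, y⁆⁻¹ = n := congrArg (fun f : MulAut N => ((f ⟨n, hn⟩ : N) : G)) h1
  exact (mul_inv_eq_iff_eq_mul.mp h2).symm

theorem le_centralizer_of_card_prime {G : Type*} [Group G] {N : Subgroup G}
    (hN : (Nat.card N).Prime) : N ≤ centralizer (N : Set G) := by
  have := Fact.mk hN
  have hcyc : IsCyclic N := isCyclic_of_prime_card rfl
  refine fun x hx => mem_centralizer_iff.mpr fun y hy => ?_
  obtain ⟨g, hg⟩ := hcyc.exists_generator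
  obtain ⟨a, ha⟩ := hg ⟨x, hx⟩
  obtain ⟨b, hb⟩ := hg ⟨y, hy⟩
  have h : (⟨y, hy⟩ : N) * ⟨x, hx⟩ = ⟨x, hx⟩ * ⟨y, hy⟩ := by
    rw [← ha, ← hb]
    exact ((Commute.refl g).zpow_zpow b a).eq
  exact congrArg Subtype.val h

theorem card_mul_relIndex_of_le {G : Type*} [Group G] {N B : Subgroup G} (h : N ≤ B) :
    Nat.card N * N.relIndex B = Nat.card B := by
  have := relIndex_mul_relIndex ⊥ N B bot_le h
  simpa only [relIndex_bot_left] using this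

theorem relIndex_comap_mk {G : Type*} [Group G] (N : Subgroup G) [N.Normal]
    (C : Subgroup (G ⧸ N)) : N.relIndex (C.comap (QuotientGroup.mk' N)) = Nat.card C := by
  have h := relIndex_ker (C.comap (QuotientGroup.mk' N)) (QuotientGroup.mk' N)
  rwa [QuotientGroup.ker_mk', map_comap_eq_self_of_surjective (QuotientGroup.mk'_surjective N)] at h

theorem le_comap_mk {G : Type*} [Group G] (N : Subgroup G) [N.Normal]
    (C : Subgroup (G ⧸ N)) : N ≤ C.comap (QuotientGroup.mk' N) := by
  have h := ker_le_comap (QuotientGroup.mk' N) C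
  rwa [QuotientGroup.ker_mk'] at h

theorem index_comap_mk {G : Type*} [Group G] (N : Subgroup G) [N.Normal]
    (C : Subgroup (G ⧸ N)) : (C.comap (QuotientGroup.mk' N)).index = C.index :=
  index_comap_of_surjective C (QuotientGroup.mk'_surjective N)

/-- A normal subgroup of `G` that is a central extension of a Hall quotient by `N` splits over
`N`, with a complement that is normal in `G`. -/
theorem exists_normal_complement_of_le_centralizer {G : Type*} [Group G] [Finite G]
    {N D : Subgroup G} [hN : N.Normal] [hD : D.Normal] (hND : N ≤ D)
    (hDc : D ≤ centralizer (N : Set G)) (hcop : (Nat.card N).Coprime (N.relIndex D)) :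
    ∃ R ≤ D, R.Normal ∧ Nat.card R = N.relIndex D ∧ N ⊓ R = ⊥ ∧ D ≤ N ⊔ R := by
  have hcard : Nat.card (N.subgroupOf D) = Nat.card N :=
    Nat.card_congr (subgroupOfEquivOfLe hND).toEquiv
  obtain ⟨S, hS⟩ := exists_right_complement'_of_coprime (N := N.subgroupOf D)
    (by rw [hcard]; exact hcop)
  have hSc : Nat.card S = N.relIndex D := hS.symm.index_eq_card.symm
  have hSi : S.index = Nat.card N := by rw [hS.index_eq_card, hcard]
  have hSn : S.Normal := by
    rw [← normalizer_eq_top_iff, eq_top_iff, ← hS.sup_eq_top]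
    refine sup_le (le_normalizer_of_conj_mem fun x hx y hy => ?_) Subgroup.le_normalizer
    have h1 : x * y = y * x := Subtype.ext (mem_centralizer_iff.mp (hDc y.2) x hx)
    rwa [h1, mul_inv_cancel_right]
  refine ⟨S.map D.subtype, map_subtype_le S, ⟨?_⟩, ?_, ?_, ?_⟩
  · rintro _ ⟨x, hx, rfl⟩ g
    set y : D := ⟨g * x * g⁻¹, hD.conj_mem _ x.2 g⟩ with hy
    have horder : orderOf y = orderOf x := by
      rw [← orderOf_coe y, ← orderOf_coe x]
      exact orderOf_injective (MulAut.conj g).toMonoidHom (MulAut.conj g).injective (x : G)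
    have hle : zpowers y ≤ S := by
      refine le_of_card_coprime_index ?_
      rw [Nat.card_zpowers, horder, hSi]
      refine Nat.Coprime.symm (hcop.coprime_dvd_right ?_)
      rw [← hSc]
      exact orderOf_dvd_natCard S hx
    exact ⟨y, hle (mem_zpowers y), rfl⟩
  · rw [card_map_of_injective D.subtype_injective, hSc]
  · rw [eq_bot_iff]
    rintro _ ⟨hxN, x, hx, rfl⟩
    have : x ∈ N.subgroupOf D ⊓ S := ⟨hxN, hx⟩
    rw [hS.disjoint.eq_bot, mem_bot] at this
    rw [this]
    exact one_mem _
  · intro d hd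
    have : (⟨d, hd⟩ : D) ∈ N.subgroupOf D ⊔ S := hS.sup_eq_top ▸ mem_top _
    have h2 := mem_map_of_mem D.subtype this
    rw [Subgroup.map_sup] at h2
    exact sup_le_sup_right (map_le_iff_le_comap.mpr le_rfl) _ h2

/-- A normal Sylow `p`-subgroup of `G / N`, where `|N| = p`, lifts to `G`. -/
theorem SylowNormalizesSections.of_normal_sylow_quotient {G : Type*} [Group G] [Finite G]
    (hG : SylowNormalizesSections G) {p : ℕ} [hp : Fact p.Prime] {N : Subgroup G} [hN : N.Normal]
    (hNp : Nat.card N = p) {P : Subgroup (G ⧸ N)} (hPn : P.Normal) (hPp : IsPGroup p P)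
    (hPi : ¬ p ∣ P.index) : HasNormalComplement p G ∨ HasNoncentralNormalSylow p G := by
  have := hPn.comap (QuotientGroup.mk' N)
  refine hG.of_normal_sylow (P.comap (QuotientGroup.mk' N)) ?_ (by rwa [index_comap_mk])
  obtain ⟨n, hn⟩ := IsPGroup.iff_card.mp hPp
  refine IsPGroup.of_card (n := n + 1) ?_
  rw [← card_mul_relIndex_of_le (le_comap_mk N P), relIndex_comap_mk, hNp, hn, pow_succ']

theorem HasNormalComplement.of_quotient {G : Type*} [Group G] [Finite G] {p : ℕ}
    [hp : Fact p.Prime] {N : Subgroup G} [hN : N.Normal] (hNp : ¬ p ∣ Nat.card N)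
    (h : HasNormalComplement p (G ⧸ N)) : HasNormalComplement p G := by
  obtain ⟨C, hCn, hCp, n, hn⟩ := h
  refine ⟨C.comap (QuotientGroup.mk' N), hCn.comap _, ?_, n, by rw [index_comap_mk, hn]⟩
  rw [← card_mul_relIndex_of_le (le_comap_mk N C), relIndex_comap_mk]
  exact hp.out.not_dvd_mul hNp hCp

theorem HasNoncentralNormalSylow.of_quotient {G : Type*} [Group G] [Finite G] {p : ℕ}
    [hp : Fact p.Prime] {N : Subgroup G} [hN : N.Normal] (hNr : (Nat.card N).Prime)
    (hNp : ¬ p ∣ Nat.card N) (h : HasNoncentralNormalSylow p (G ⧸ N)) :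
    HasNoncentralNormalSylow p G := by
  obtain ⟨Q, hQn, hQp, hQi, hQX, hQc, hQz⟩ := h
  set f := QuotientGroup.mk' N with hf
  have hsurj : Function.Surjective f := QuotientGroup.mk'_surjective N
  have hker : f.ker = N := QuotientGroup.ker_mk' N
  have hBn : (Q.comap f).Normal := hQn.comap f
  have hNB : N ≤ Q.comap f := le_comap_mk N Q
  obtain ⟨n, hn⟩ := IsPGroup.iff_card.mp hQp
  have hBc : Q.comap f ≤ centralizer (N : Set G) := by
    intro b hb
    have h1 : f b ∈ (⁅(⊤ : Subgroup G), (⊤ : Subgroup G)⁆).map f := by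
      rw [map_commutator, map_top_of_surjective f hsurj]
      exact commutator_mono le_top le_rfl (hQc hb)
    obtain ⟨c, hc, hcb⟩ := h1
    have h2 : c⁻¹ * b ∈ N := by
      rw [← hker, MonoidHom.mem_ker, map_mul, map_inv, hcb, inv_mul_cancel]
    have h3 := mul_mem (commutator_le_centralizer_of_card_prime hNr hc)
      (le_centralizer_of_card_prime hNr h2)
    rwa [mul_inv_cancel_left] at h3
  have hrel : N.relIndex (Q.comap f) = p ^ n := by rw [relIndex_comap_mk, hn]
  obtain ⟨P, hPB, hPn, hPcard, hNP, hBP⟩ := exists_normal_complement_of_le_centralizer hNB hBc (by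
    rw [hrel]
    exact Nat.Coprime.pow_right n ((Nat.Prime.coprime_iff_not_dvd hp.out).mpr hNp).symm)
  have hdisj : ∀ x ∈ P, x ∈ N → x = 1 := fun x hxP hxN => by
    have : x ∈ N ⊓ P := ⟨hxN, hxP⟩
    rwa [hNP, mem_bot] at this
  have hPQ : P.map f = Q := by
    refine le_antisymm (map_le_iff_le_comap.mpr hPB) fun y hy => ?_
    obtain ⟨b, rfl⟩ := hsurj y
    obtain ⟨a, ha, c, hc, hac⟩ := mem_sup_of_normal_left.mp (hBP hy)
    refine ⟨c, hc, ?_⟩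
    rw [← hac, map_mul, show f a = 1 from by rwa [← MonoidHom.mem_ker, hker], one_mul]
  refine ⟨P, hPn, IsPGroup.of_card (hPcard.trans hrel), ?_, fun X hX => ⟨fun x hx g => ?_⟩,
    fun x hx => ?_, ?_⟩
  · have h1 : P.index = Nat.card N * Q.index := by
      have h2 := P.card_mul_index
      rw [← (Q.comap f).card_mul_index, ← card_mul_relIndex_of_le hNB, index_comap_mk, ← hPcard,
        mul_comm (Nat.card N), mul_assoc] at h2
      exact Nat.eq_of_mul_eq_mul_left Nat.card_pos h2
    rw [h1]
    exact hp.out.not_dvd_mul hNp hQi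
  · have h1 : (X.map f).Normal := hQX _ (hPQ ▸ map_mono hX)
    obtain ⟨y, hy, hyx⟩ := h1.conj_mem (f x) (mem_map_of_mem f hx) (f g)
    have h2 : y⁻¹ * (g * x * g⁻¹) = 1 := by
      refine hdisj _ (P.mul_mem (P.inv_mem (hX hy)) (hPn.conj_mem x (hX hx) g)) ?_
      rw [← hker, MonoidHom.mem_ker, map_mul, map_inv, hyx, map_mul, map_mul, map_inv,
        inv_mul_cancel]
    rw [← inv_mul_eq_one.mp h2]
    exact hy
  · have h1 : f x ∈ (⁅P, (⊤ : Subgroup G)⁆).map f := by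
      rw [map_commutator, map_top_of_surjective f hsurj, hPQ]
      exact hQc (hPB hx)
    obtain ⟨c, hc, hcx⟩ := h1
    have h2 : c⁻¹ * x = 1 := by
      refine hdisj _ (P.mul_mem (P.inv_mem (commutator_le_left P ⊤ hc)) hx) ?_
      rw [← hker, MonoidHom.mem_ker, map_mul, map_inv, hcx, inv_mul_cancel]
    rw [← inv_mul_eq_one.mp h2]
    exact hc
  · rw [eq_bot_iff]
    rintro z ⟨hzP, hzc⟩
    refine mem_bot.mpr (hdisj z hzP ?_)
    have : f z ∈ Q ⊓ center (G ⧸ N) := by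
      refine ⟨hPB hzP, mem_center_iff.mpr fun y => ?_⟩
      obtain ⟨g, rfl⟩ := hsurj y
      rw [← map_mul, ← map_mul, mem_center_iff.mp hzc g]
    rw [hQz, mem_bot] at this
    rwa [← hker, MonoidHom.mem_ker]

theorem SylowNormalizesSections.hasNormalComplement_or {p : ℕ} [hp : Fact p.Prime] {G : Type*}
    [Group G] [Finite G] [hsol : Group.IsSolvable G] (hG : SylowNormalizesSections G) :
    HasNormalComplement p G ∨ HasNoncentralNormalSylow p G := by
  induction hcard : Nat.card G using Nat.strong_induction_on generalizing G with
  | _ n ih =>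
    have hquot : ∀ (N : Subgroup G) [N.Normal], (Nat.card N).Prime →
        HasNormalComplement p (G ⧸ N) ∨ HasNoncentralNormalSylow p (G ⧸ N) := by
      intro N _ hN
      refine ih (Nat.card (G ⧸ N)) ?_
        (hG.of_surjective (QuotientGroup.mk' N) (QuotientGroup.mk'_surjective N)) rfl
      rw [← hcard, ← N.card_mul_index]
      exact lt_mul_of_one_lt_left (Nat.pos_of_ne_zero index_ne_zero_of_finite) hN.one_lt
    by_cases hne : ∃ N : Subgroup G, N.Normal ∧ (Nat.card N).Prime ∧ Nat.card N ≠ p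
    · obtain ⟨N, hN, hNr, hrp⟩ := hne
      have hNp : ¬ p ∣ Nat.card N := fun h =>
        hrp ((Nat.prime_dvd_prime_iff_eq hp.out hNr).mp h).symm
      exact (hquot N hNr).imp (.of_quotient hNp) (.of_quotient hNr hNp)
    · push Not at hne
      by_cases htriv : (⊤ : Subgroup G) = ⊥
      · refine .inl ⟨⊥, inferInstance, ?_, 0, ?_⟩
        · rw [card_bot]
          exact hp.out.not_dvd_one
        · rw [← htriv, index_top, pow_zero]
      obtain ⟨N, -, hN, hNr⟩ := hG.exists_normal_card_prime htriv
      have hNp := hne N hN hNr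
      rcases hquot N hNr with ⟨C, hCn, hCp, m, hm⟩ | ⟨P, hPn, hPp, hPi, -⟩
      · set f := QuotientGroup.mk' N with hf
        have hBn : (C.comap f).Normal := hCn.comap f
        have hND : N ≤ C.comap f ⊓ centralizer (N : Set G) :=
          le_inf (le_comap_mk N C) (le_centralizer_of_card_prime hNr)
        have hrel : ¬ p ∣ N.relIndex (C.comap f ⊓ centralizer (N : Set G)) := by
          intro h
          have h1 := h.trans (Dvd.intro _ (relIndex_mul_relIndex N _ (C.comap f) hND inf_le_left))
          rw [relIndex_comap_mk] at h1
          exact hCp h1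
        obtain ⟨R, hRD, hRn, hRc, -, hDR⟩ := exists_normal_complement_of_le_centralizer hND
          inf_le_right (by rw [hNp]; exact (Nat.Prime.coprime_iff_not_dvd hp.out).mpr hrel)
        have hR : R = ⊥ := by
          by_contra hR
          obtain ⟨M, hMR, hM, hMr⟩ := hG.exists_normal_card_prime hR
          refine hrel (hRc ▸ ?_)
          rw [← hne M hM hMr]
          exact card_dvd_of_le hMR
        rw [hR, sup_bot_eq] at hDR
        have hcen : C ≤ center (G ⧸ N) := by
          intro y hy
          obtain ⟨c, rfl⟩ := QuotientGroup.mk'_surjective N y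
          refine mem_center_iff.mpr fun z => ?_
          obtain ⟨g, rfl⟩ := QuotientGroup.mk'_surjective N z
          rw [← map_mul, ← map_mul, eq_comm]
          have h1 : ⁅c, g⁆ ∈ N := hDR ⟨commutator_le_left (C.comap f) ⊤
            (commutator_mem_commutator hy (mem_top g)),
            commutator_le_centralizer_of_card_prime hNr
              (commutator_mem_commutator (mem_top c) (mem_top g))⟩
          rw [← QuotientGroup.ker_mk' N, MonoidHom.mem_ker, map_commutatorElement,
            commutatorElement_eq_one_iff_mul_comm] at h1
          rw [map_mul, map_mul, h1]
        have hCq : IsPGroup p ((G ⧸ N) ⧸ C) := IsPGroup.of_card (hm : Nat.card _ = _)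
        have := hCq.isNilpotent
        have hnil : Group.IsNilpotent (G ⧸ N) :=
          Subgroup.isNilpotent_of_ker_le_center (QuotientGroup.mk' C)
            (by rwa [QuotientGroup.ker_mk'])
        obtain ⟨S⟩ : Nonempty (Sylow p (G ⧸ N)) := inferInstance
        exact hG.of_normal_sylow_quotient hNp inferInstance S.isPGroup'
          S.not_dvd_index
      · exact hG.of_normal_sylow_quotient hNp hPn hPp hPi

end Dichotomy

section NilpotentResidual

open scoped commutatorElement

variable {G : Type*} [Group G]

theorem inf_iSup_upperCentralSeries_eq_bot {P : Subgroup G} [hP : P.Normal]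
    (h : P ⊓ center G = ⊥) : P ⊓ ⨆ n, Subgroup.upperCentralSeries G n = ⊥ := by
  have key : ∀ n, ∀ x ∈ P, x ∈ Subgroup.upperCentralSeries G n → x = 1 := by
    intro n
    induction n with
    | zero => exact fun x _ hx => mem_bot.mp hx
    | succ n ih =>
      intro x hxP hx
      have hxc : x ∈ P ⊓ center G := by
        refine ⟨hxP, mem_center_iff.mpr fun y => ?_⟩
        have h1 := ih ⁅x, y⁆ (commutator_le_left P ⊤ (commutator_mem_commutator hxP (mem_top y)))
          (Subgroup.mem_upperCentralSeries_succ_iff.mp hx y)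
        exact (commutatorElement_eq_one_iff_mul_comm.mp h1).symm
      rwa [h, mem_bot] at hxc
  rw [eq_bot_iff]
  rintro x ⟨hxP, hx⟩
  obtain ⟨n, hn⟩ := (mem_iSup_of_directed (Subgroup.upperCentralSeries_mono G).directed_le).mp hx
  exact mem_bot.mpr (key n x hxP hn)

/-- The nilpotent residual of a finite solvable PST-group is a normal Hall subgroup all of whose
subgroups are normal, and its order is prime to that of the hypercenter. -/
theorem IsPSTGroup.exists_nilpotentResidual [Finite G] [hsol : Group.IsSolvable G]
    (hG : IsPSTGroup G) :
    ∃ (L : Subgroup G) (_ : L.Normal), Group.IsNilpotent (G ⧸ L) ∧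
      (Nat.card L).Coprime L.index ∧ (∀ X ≤ L, X.Normal) ∧
      (Nat.card L).Coprime (Nat.card (⨆ n, Subgroup.upperCentralSeries G n : Subgroup G)) := by
  have hS := hG.sylowNormalizesSections
  obtain ⟨n, hn⟩ := WellFoundedLT.antitone_chain_condition
    (⊤ : Subgroup G).lowerCentralSeries_antitone
  set L := (⊤ : Subgroup G).lowerCentralSeries n with hL
  have hLle : ∀ m, L ≤ (⊤ : Subgroup G).lowerCentralSeries m := by
    intro m
    rcases le_total n m with h | h
    · exact (hn m h).le
    · exact (⊤ : Subgroup G).lowerCentralSeries_antitone h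
  have hprime : ∀ p : ℕ, p.Prime → p ∣ Nat.card L → ∃ P ≤ L, P.Normal ∧ IsPGroup p P ∧
      ¬ p ∣ P.index ∧ (∀ X ≤ P, X.Normal) ∧ P ⊓ center G = ⊥ := by
    intro p hp hpL
    have := Fact.mk hp
    rcases hS.hasNormalComplement_or (p := p) with ⟨C, hCn, hCp, m, hm⟩ |
      ⟨P, hPn, hPp, hPi, hPX, hPc, hPz⟩
    · refine absurd (hpL.trans (card_dvd_of_le ?_)) hCp
      have hCq : IsPGroup p (G ⧸ C) := IsPGroup.of_card (hm : Nat.card _ = _)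
      obtain ⟨k, hk⟩ := Subgroup.nilpotent_iff_lowerCentralSeries.mp hCq.isNilpotent
      refine (hLle k).trans ?_
      rw [← QuotientGroup.ker_mk' C, ← MonoidHom.comap_bot, ← map_le_iff_le_comap, ← hk,
        map_lowerCentralSeries, map_top_of_surjective _ (QuotientGroup.mk'_surjective C)]
    · refine ⟨P, ?_, hPn, hPp, hPi, hPX, hPz⟩
      have : ∀ m, P ≤ (⊤ : Subgroup G).lowerCentralSeries m := by
        intro m
        induction m with
        | zero => exact le_top
        | succ m ih => exact hPc.trans (commutator_mono ih le_rfl)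
      exact this n
  refine ⟨L, inferInstance, ?_, ?_, fun X hX => ?_, ?_⟩
  · rw [Subgroup.nilpotent_iff_lowerCentralSeries]
    refine ⟨n, ?_⟩
    rw [← map_top_of_surjective _ (QuotientGroup.mk'_surjective L), ← map_lowerCentralSeries, ← hL,
      Subgroup.map_eq_bot_iff, QuotientGroup.ker_mk']
  · refine Nat.coprime_of_dvd fun p hp h1 h2 => ?_
    obtain ⟨P, hPL, -, -, hPi, -⟩ := hprime p hp h1
    exact hPi (h2.trans (index_dvd_of_le hPL))
  · have htop : (X.normalCore).subgroupOf X = ⊤ := by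
      refine eq_top_of_forall_sylow_le fun p hp => ?_
      obtain ⟨S⟩ : Nonempty (Sylow p X) := inferInstance
      refine ⟨S, map_le_iff_le_comap.mp ?_⟩
      have hSX : (S : Subgroup X).map X.subtype ≤ X := map_subtype_le _
      have hSp : IsPGroup p ((S : Subgroup X).map X.subtype) := S.isPGroup'.map _
      suffices h : ((S : Subgroup X).map X.subtype).Normal from normal_le_normalCore.mpr hSX
      by_cases hpL : p ∣ Nat.card L
      · obtain ⟨P, -, hPn, -, hPi, hPX, -⟩ := hprime p hp.out hpL
        exact hPX _ (hSp.le_of_not_dvd_index hPi)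
      · obtain ⟨k, hk⟩ := IsPGroup.iff_card.mp hSp
        have : (S : Subgroup X).map X.subtype = ⊥ := by
          rw [← card_eq_one, hk]
          rcases Nat.eq_zero_or_pos k with rfl | hk0
          · exact pow_zero p
          · refine absurd ?_ hpL
            exact (dvd_pow_self p hk0.ne').trans (hk ▸ card_dvd_of_le (hSX.trans hX))
        rw [this]
        infer_instance
    have : X.normalCore = X := le_antisymm (normalCore_le X) (subgroupOf_eq_top.mp htop)
    rw [← this]
    infer_instance
  · refine Nat.coprime_of_dvd fun p hp h1 h2 => ?_
    have := Fact.mk hp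
    obtain ⟨P, -, hPn, -, hPi, -, hPz⟩ := hprime p hp h1
    obtain ⟨x, hx⟩ := exists_prime_orderOf_dvd_card' p h2
    rw [← orderOf_coe] at hx
    have hxP : (x : G) ∈ P := by
      have hz : IsPGroup p (zpowers (x : G)) :=
        IsPGroup.of_card (n := 1) (by rw [Nat.card_zpowers, hx, pow_one])
      exact hz.le_of_not_dvd_index hPi (mem_zpowers _)
    have h3 : (x : G) ∈ P ⊓ ⨆ n, Subgroup.upperCentralSeries G n := ⟨hxP, x.2⟩
    rw [inf_iSup_upperCentralSeries_eq_bot hPz, mem_bot] at h3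
    rw [h3, orderOf_one] at hx
    exact hp.one_lt.ne hx

end NilpotentResidual

section NilpotentQuotient

variable {G : Type*} [Group G]

theorem mul_comm_of_map_mul_comm {G' : Type*} [Group G'] (f : G →* G') {M X : Subgroup G}
    (hM : f.ker ≤ M)
    (h : (M.map f : Set G') * (X.map f : Set G') = (X.map f : Set G') * (M.map f : Set G')) :
    (M : Set G) * (X : Set G) = (X : Set G) * (M : Set G) := by
  refine mul_comm_of_forall_mem fun x hx y hy => ?_
  have h1 : f x * f y ∈ (M.map f : Set G') * (X.map f : Set G') :=
    h ▸ Set.mul_mem_mul (mem_map_of_mem f hx) (mem_map_of_mem f hy)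
  obtain ⟨_, ⟨m, hm, rfl⟩, _, ⟨z, hz, rfl⟩, hmz⟩ := h1
  have h2 : m⁻¹ * (x * y) * z⁻¹ ∈ f.ker := by
    rw [MonoidHom.mem_ker, map_mul, map_mul, map_mul, ← hmz]
    simp
  refine ⟨m * (m⁻¹ * (x * y) * z⁻¹), M.mul_mem hm (hM h2), z, hz, ?_⟩
  simp only
  group

theorem mul_comm_of_coprime_card_of_isNilpotent {N : Type*} [Group N] [Finite N]
    [hN : Group.IsNilpotent N] {H X : Subgroup N} (h : (Nat.card H).Coprime (Nat.card X)) :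
    (H : Set N) * (X : Set N) = (X : Set N) * (H : Set N) := by
  refine mul_comm_of_forall_mem fun x hx y hy => ⟨y, hy, x, hx, commute_of_coprime_orderOf ?_⟩
  exact Nat.Coprime.coprime_dvd_left (orderOf_dvd_natCard H hy)
    (h.coprime_dvd_right (orderOf_dvd_natCard X hx))

theorem normal_of_forall_le_normal {L K : Subgroup G} (hL : ∀ X ≤ L, X.Normal)
    {P : Subgroup K} (hP : P ≤ L.subgroupOf K) : P.Normal := by
  have h1 : (P.map K.subtype).Normal := hL _ (map_le_iff_le_comap.mpr hP)
  rw [← comap_map_eq_self_of_injective K.subtype_injective P]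
  exact h1.comap _

variable [Finite G] {L : Subgroup G} [hLn : L.Normal] [hnil : Group.IsNilpotent (G ⧸ L)]

/-- If `G` is an SST-group, `G / L` is nilpotent and all subgroups of `L` are normal in `G`, then
every subgroup `H` of `G` is SS-permutable: `H` is SS-permutable in `HL`, and `HL` is so in `G`. -/
theorem IsSSTGroup.isSSPermutable (hL : ∀ X ≤ L, X.Normal) (hG : IsSSTGroup G)
    (H : Subgroup G) : IsSSPermutable H := by
  refine hG H (H ⊔ L) le_sup_left ⟨L.subgroupOf (H ⊔ L), ?_, fun p _ P => ?_⟩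
    ⟨⊤, ?_, fun p _ P => ?_⟩
  · rw [Set.eq_univ_iff_forall]
    rintro ⟨g, hg⟩
    obtain ⟨h, hh, l, hl, rfl⟩ := mem_sup_of_normal_right.mp hg
    exact ⟨⟨h, mem_sup_left hh⟩, hh, ⟨l, mem_sup_right hl⟩, hl, rfl⟩
  · have := normal_of_forall_le_normal hL (map_subtype_le (P : Subgroup (L.subgroupOf (H ⊔ L))))
    exact mul_comm_of_normal_right _ _
  · rw [Set.eq_univ_iff_forall]
    exact fun g => ⟨1, one_mem _, g, mem_top g, one_mul g⟩
  · have hsurj : Function.Surjective ((QuotientGroup.mk' L).comp (⊤ : Subgroup G).subtype) := by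
      intro y
      obtain ⟨g, rfl⟩ := QuotientGroup.mk'_surjective L y
      exact ⟨⟨g, mem_top g⟩, rfl⟩
    refine mul_comm_of_map_mul_comm (QuotientGroup.mk' L)
      (by rw [QuotientGroup.ker_mk']; exact le_sup_right) ?_
    have : (P.mapSurjective hsurj : Subgroup (G ⧸ L)).Normal := inferInstance
    rw [Sylow.coe_mapSurjective, ← map_map] at this
    exact mul_comm_of_normal_right _ _

/-- If `G` is a BT-group, `G / L` is nilpotent and all subgroups of `L` are normal in `G`, then
every subgroup `H` of `G` is semipermutable: `H` is semipermutable in `HL`, and `HL` is so in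
`G`. -/
theorem IsBTGroup.isSemipermutable (hL : ∀ X ≤ L, X.Normal) (hG : IsBTGroup G)
    (H : Subgroup G) : IsSemipermutable H := by
  refine hG H (H ⊔ L) le_sup_left (fun X hX => ?_) fun X hX => ?_
  · have hXL : X ≤ L.subgroupOf (H ⊔ L) := by
      refine le_of_card_coprime_index (Nat.Coprime.coprime_dvd_right ?_ hX.symm)
      have h1 : L.relIndex (H ⊔ L) ∣ Nat.card H := by
        rw [relIndex_sup_right]
        exact relIndex_dvd_card L H
      rwa [Nat.card_congr (subgroupOfEquivOfLe (le_sup_left : H ≤ H ⊔ L)).toEquiv]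
    have := normal_of_forall_le_normal hL hXL
    exact mul_comm_of_normal_right _ _
  · refine mul_comm_of_map_mul_comm (QuotientGroup.mk' L)
      (by rw [QuotientGroup.ker_mk']; exact le_sup_right) ?_
    exact mul_comm_of_coprime_card_of_isNilpotent
      (Nat.Coprime.coprime_dvd_left (card_map_dvd _ _) (hX.coprime_dvd_right (card_map_dvd _ _)))

end NilpotentQuotient

section HypercentralQuotient

variable {G : Type*} [Group G]

theorem normal_of_le_map {G' : Type*} [Group G'] {f : G →* G'} (hf : Function.Surjective f)
    {L : Subgroup G} (hL : ∀ X ≤ L, X.Normal) : ∀ Y ≤ L.map f, Y.Normal := by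
  intro Y hY
  have h1 : (Y.comap f ⊓ L).map f = Y := by
    refine le_antisymm (map_le_iff_le_comap.mpr inf_le_left) fun y hy => ?_
    obtain ⟨l, hl, rfl⟩ := hY hy
    exact ⟨l, ⟨hy, hl⟩, rfl⟩
  rw [← h1]
  exact (hL _ inf_le_right).map f hf

theorem isNilpotent_quotient_map {G' : Type*} [Group G'] {f : G →* G'}
    (hf : Function.Surjective f) {L : Subgroup G} [L.Normal] [(L.map f).Normal]
    [hL : Group.IsNilpotent (G ⧸ L)] : Group.IsNilpotent (G' ⧸ L.map f) := by
  refine Group.nilpotent_of_surjective (QuotientGroup.map L (L.map f) f (le_comap_map f L)) ?_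
  intro y
  obtain ⟨z, rfl⟩ := QuotientGroup.mk'_surjective _ y
  obtain ⟨x, rfl⟩ := hf z
  exact ⟨(x : G ⧸ L), rfl⟩

theorem card_eq_card_inf_mul_relIndex (H L : Subgroup G) :
    Nat.card H = Nat.card (H ⊓ L : Subgroup G) * L.relIndex H := by
  rw [← inf_relIndex_left, card_mul_relIndex_of_le inf_le_left]

variable [Finite G] {L Z : Subgroup G} [hLn : L.Normal] [hZn : Z.Normal]

/-- Let `L` be a normal Hall subgroup with all subgroups normal and `Z` a normal subgroup of order
prime to `|L|`. If `H` and `X` permute modulo `L` and modulo `Z`, and their intersections with `L`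
have coprime orders, then they permute. -/
theorem mul_comm_of_quotients (hcop : (Nat.card L).Coprime L.index) (hL : ∀ X ≤ L, X.Normal)
    (hLZ : (Nat.card L).Coprime (Nat.card Z)) {H X : Subgroup G}
    (hmodZ : (H.map (QuotientGroup.mk' Z) : Set (G ⧸ Z)) * (X.map (QuotientGroup.mk' Z)) =
      (X.map (QuotientGroup.mk' Z) : Set (G ⧸ Z)) * (H.map (QuotientGroup.mk' Z)))
    (hmodL : (H.map (QuotientGroup.mk' L) : Set (G ⧸ L)) * (X.map (QuotientGroup.mk' L)) =
      (X.map (QuotientGroup.mk' L) : Set (G ⧸ L)) * (H.map (QuotientGroup.mk' L)))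
    (hHX : (Nat.card (H ⊓ L : Subgroup G)).Coprime (Nat.card (X ⊓ L : Subgroup G))) :
    (H : Set G) * (X : Set G) = (X : Set G) * (H : Set G) := by
  set f := QuotientGroup.mk' Z with hf
  set W := (H.map f ⊔ X.map f).comap f with hW
  have hHW : H ≤ W := map_le_iff_le_comap.mp le_sup_left
  have hXW : X ≤ W := map_le_iff_le_comap.mp le_sup_right
  have hrel : ∀ Y : Subgroup G, (Nat.card (W ⊓ L : Subgroup G)).Coprime (L.relIndex Y) := fun Y =>
    Nat.Coprime.coprime_dvd_left (card_dvd_of_le inf_le_right)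
      (hcop.coprime_dvd_right (relIndex_dvd_index_of_normal L Y))
  have hWcard : Nat.card W ∣ Nat.card Z * (Nat.card H * Nat.card X) := by
    rw [← card_mul_relIndex_of_le (le_comap_mk Z _), relIndex_comap_mk]
    exact mul_dvd_mul_left _ ((card_sup_dvd_of_mul_comm hmodZ).trans
      (mul_dvd_mul (card_map_dvd _ _) (card_map_dvd _ _)))
  have hWL : Nat.card (W ⊓ L : Subgroup G) ∣
      Nat.card (H ⊓ L : Subgroup G) * Nat.card (X ⊓ L : Subgroup G) := by
    have h1 := (card_dvd_of_le (inf_le_left : W ⊓ L ≤ W)).trans hWcard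
    have h2 := Nat.Coprime.dvd_of_dvd_mul_left
      (Nat.Coprime.coprime_dvd_left (card_dvd_of_le inf_le_right) hLZ) h1
    rw [card_eq_card_inf_mul_relIndex H L, card_eq_card_inf_mul_relIndex X L,
      mul_mul_mul_comm] at h2
    exact Nat.Coprime.dvd_of_dvd_mul_right ((hrel H).mul_right (hrel X)) h2
  have hle : W ⊓ L ≤ (H ⊓ L) ⊔ (X ⊓ L) := by
    have h1 : (H ⊓ L) ⊔ (X ⊓ L) ≤ W ⊓ L :=
      sup_le (inf_le_inf_right L hHW) (inf_le_inf_right L hXW)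
    refine (eq_of_le_of_card_ge h1 (Nat.le_of_dvd Nat.card_pos (hWL.trans ?_))).ge
    exact hHX.mul_dvd_of_dvd_of_dvd (card_dvd_of_le le_sup_left) (card_dvd_of_le le_sup_right)
  have hHL : (H ⊓ L).Normal := hL _ inf_le_right
  refine mul_comm_of_forall_mem fun x hx y hy => ?_
  have h1 := Set.mul_mem_mul (mem_map_of_mem (QuotientGroup.mk' L) hx)
    (mem_map_of_mem (QuotientGroup.mk' L) hy)
  rw [← hmodL] at h1
  obtain ⟨_, ⟨m, hm, rfl⟩, _, ⟨z, hz, rfl⟩, hmz⟩ := h1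
  have h2 : m⁻¹ * (x * y) * z⁻¹ ∈ W ⊓ L := by
    refine ⟨W.mul_mem (W.mul_mem (W.inv_mem (hHW hm)) (W.mul_mem (hXW hx) (hHW hy)))
      (W.inv_mem (hXW hz)), ?_⟩
    rw [← QuotientGroup.ker_mk' L]
    change m⁻¹ * (x * y) * z⁻¹ ∈ (QuotientGroup.mk' L).ker
    rw [MonoidHom.mem_ker, map_mul, map_mul, map_mul, ← hmz]
    simp
  obtain ⟨a, ha, b, hb, hab⟩ := mem_sup_of_normal_left.mp (hle h2)
  refine ⟨m * a, H.mul_mem hm ha.1, b * z, X.mul_mem hb.1 hz, ?_⟩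
  calc m * a * (b * z) = m * (a * b) * z := by group
    _ = x * y := by rw [hab]; group

variable [hnil : Group.IsNilpotent (G ⧸ L)]

theorem isSemipermutable_of_map (hcop : (Nat.card L).Coprime L.index) (hL : ∀ X ≤ L, X.Normal)
    (hLZ : (Nat.card L).Coprime (Nat.card Z)) {H : Subgroup G}
    (hH : IsSemipermutable (H.map (QuotientGroup.mk' Z))) : IsSemipermutable H := by
  intro X hX
  refine mul_comm_of_quotients hcop hL hLZ (hH _ ?_) (mul_comm_of_coprime_card_of_isNilpotent ?_) ?_
  · exact Nat.Coprime.coprime_dvd_left (card_map_dvd _ _) (hX.coprime_dvd_right (card_map_dvd _ _))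
  · exact Nat.Coprime.coprime_dvd_left (card_map_dvd _ _) (hX.coprime_dvd_right (card_map_dvd _ _))
  · exact Nat.Coprime.coprime_dvd_left (card_dvd_of_le inf_le_left)
      (hX.coprime_dvd_right (card_dvd_of_le inf_le_left))

theorem isSSPermutable_of_map (hcop : (Nat.card L).Coprime L.index) (hL : ∀ X ≤ L, X.Normal)
    (hLZ : (Nat.card L).Coprime (Nat.card Z)) {H : Subgroup G}
    (hH : IsSSPermutable (H.map (QuotientGroup.mk' Z))) : IsSSPermutable H := by
  obtain ⟨K, hHK, hK⟩ := hH
  set f := QuotientGroup.mk' Z with hf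
  have hfs : Function.Surjective f := QuotientGroup.mk'_surjective Z
  have huniv : (H : Set G) * (K.comap f : Set G) = Set.univ := by
    rw [Set.eq_univ_iff_forall]
    intro x
    obtain ⟨_, ⟨h, hh, rfl⟩, k, hk, hhk⟩ : f x ∈ (H.map f : Set (G ⧸ Z)) * (K : Set (G ⧸ Z)) :=
      hHK ▸ Set.mem_univ _
    refine ⟨h, hh, h⁻¹ * x, ?_, mul_inv_cancel_left h x⟩
    change f (h⁻¹ * x) ∈ K
    rw [map_mul, map_inv, ← hhk]
    simpa using hk
  refine ⟨K.comap f, huniv, fun p hp P => ?_⟩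
  set P' := (P : Subgroup (K.comap f)).map (K.comap f).subtype with hP'
  have hPp : IsPGroup p P' := P.isPGroup'.map _
  by_cases hpL : p ∣ Nat.card L
  · have hpi : ¬ p ∣ L.index := fun h => Nat.not_coprime_of_dvd_of_dvd hp.out.one_lt hpL h hcop
    have : P'.Normal := hL _ (hPp.le_of_not_dvd_index hpi)
    exact mul_comm_of_normal_right _ _
  refine mul_comm_of_quotients hcop hL hLZ ?_ ?_ ?_
  · have h1 := hK p (P.mapSurjective (f.subgroupComap_surjective_of_surjective K hfs))
    rw [Sylow.coe_mapSurjective, map_map] at h1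
    rw [hP', map_map]
    exact h1
  · set g := QuotientGroup.mk' L with hg
    have hgs : Function.Surjective g := QuotientGroup.mk'_surjective L
    refine mul_comm_of_supplement_of_isNilpotent (K := (K.comap f).map g) (p := p) ?_
      (fun k hk hkp => ?_) (hPp.map g)
    · rw [coe_map, coe_map, ← Set.image_mul, huniv, Set.image_univ, hgs.range_eq]
    · set S := P.mapSurjective (g.subgroupMap_surjective (K.comap f)) with hS
      have hSn : (S : Subgroup ((K.comap f).map g)).Normal := inferInstance
      have hz : IsPGroup p (zpowers (⟨k, hk⟩ : (K.comap f).map g)) := by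
        obtain ⟨j, hj⟩ := hkp
        rintro ⟨_, i, rfl⟩
        refine ⟨j, Subtype.ext (Subtype.ext ?_)⟩
        change (k ^ i) ^ p ^ j = 1
        rw [← zpow_natCast, ← zpow_mul, mul_comm, zpow_mul, zpow_natCast, hj, one_zpow]
      obtain ⟨x, hx, hxk⟩ := hz.le_of_not_dvd_index S.not_dvd_index (mem_zpowers _)
      exact ⟨x, mem_map_of_mem _ hx, congrArg Subtype.val hxk⟩
  · obtain ⟨n, hn⟩ := IsPGroup.iff_card.mp hPp
    refine Nat.Coprime.coprime_dvd_left (card_dvd_of_le inf_le_right) ?_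
    refine Nat.Coprime.coprime_dvd_right (card_dvd_of_le inf_le_left) ?_
    rw [hn]
    exact Nat.Coprime.pow_right n ((Nat.Prime.coprime_iff_not_dvd hp.out).mpr hpL).symm

end HypercentralQuotient

end Auxiliary

/-- Lemma 3.1. -/
theorem lemma31 {G : Type*} [Group G] [Finite G]
    (hsol : IsSolvable G) (hpst : IsPSTGroup G)
    (Z : Subgroup G) [Z.Normal] (hZ : Z = ⨆ n, upperCentralSeries G n) :
    ((IsSolvable (G ⧸ Z) ∧ IsSSTGroup (G ⧸ Z)) → IsSolvable G ∧ IsSSTGroup G) ∧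
      ((IsSolvable (G ⧸ Z) ∧ IsBTGroup (G ⧸ Z)) → IsSolvable G ∧ IsBTGroup G) := by
  have hsol' : Group.IsSolvable G := hsol
  obtain ⟨L, hLn, hnil, hcop, hL, hLZ⟩ := hpst.exists_nilpotentResidual
  have hZ' : Z = ⨆ n, Subgroup.upperCentralSeries G n := hZ
  rw [← hZ'] at hLZ
  have hsurj := QuotientGroup.mk'_surjective Z
  have hmap : (L.map (QuotientGroup.mk' Z)).Normal := hLn.map _ hsurj
  have hnil' := isNilpotent_quotient_map hsurj (L := L)
  have hL' := normal_of_le_map hsurj hL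
  refine ⟨fun h => ⟨hsol, fun H _ _ _ _ => ?_⟩, fun h => ⟨hsol, fun H _ _ _ _ => ?_⟩⟩
  · exact isSSPermutable_of_map hcop hL hLZ (h.2.isSSPermutable hL' _)
  · exact isSemipermutable_of_map hcop hL hLZ (h.2.isSemipermutable hL' _)
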